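/- Let D be a finite set of at least two points in the Euclidean plane, and for each t ∈ D let d(t) = min_{t'∈D, t'≠t} dist(t, t') and let ε be a real number with 0 < ε < d(t) for all t ∈ D. Let a : D → ℝ and w : D → ℝ be functions with a(t) > 0 and ((d(t) − ε)/d(t))² · a(t) ≤ w(t) ≤ a(t) for every t ∈ D. Then | Σ_{t∈D} a(t)/w(t) − |D| | ≤ Σ_{t∈D} (2·d(t)·ε − ε²)/((d(t) − ε)²). -/

import Mathlib

/-- Theorem 2 of the paper: if for each tuple `t` the estimated cell volume `w t`
satisfies `((d t − ε)/d t)² · a t ≤ w t ≤ a t`, where `a t` is the true cell volume and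
`d t` is the nearest distance from `t` to another tuple, then the bias of the COUNT(*)
estimator is at most `Σ_t (2·d t·ε − ε²)/((d t − ε)²)`. -/
theorem count_estimator_bias_bound (D : Finset (EuclideanSpace ℝ (Fin 2)))
    (hD : 2 ≤ D.card)
    (d : EuclideanSpace ℝ (Fin 2) → ℝ)
    (hd : ∀ t ∈ D, (∃ t' ∈ D, t' ≠ t ∧ d t = dist t t') ∧
      ∀ t' ∈ D, t' ≠ t → d t ≤ dist t t')
    (ε : ℝ) (hε : 0 < ε) (hεd : ∀ t ∈ D, ε < d t)
    (a w : EuclideanSpace ℝ (Fin 2) → ℝ)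
    (ha : ∀ t ∈ D, 0 < a t)
    (hw : ∀ t ∈ D, ((d t - ε) / d t) ^ 2 * a t ≤ w t ∧ w t ≤ a t) :
    |(∑ t ∈ D, a t / w t) - (D.card : ℝ)| ≤
      ∑ t ∈ D, (2 * d t * ε - ε ^ 2) / (d t - ε) ^ 2 := by
  have hcard : (∑ t ∈ D, a t / w t) - (D.card : ℝ) = ∑ t ∈ D, (a t / w t - 1) := by
    simp [Finset.sum_sub_distrib]
  rw [hcard]
  refine (Finset.abs_sum_le_sum_abs _ _).trans (Finset.sum_le_sum ?_)
  intro t ht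
  have h1 := hεd t ht
  have h2 := ha t ht
  obtain ⟨h3, h4⟩ := hw t ht
  have hdp : 0 < d t := hε.trans h1
  have hs : 0 < d t - ε := sub_pos.mpr h1
  have hwp : 0 < w t := lt_of_lt_of_le (by positivity) h3
  have h5 : (d t - ε) ^ 2 * a t ≤ w t * d t ^ 2 := by
    rw [div_pow, div_mul_eq_mul_div, div_le_iff₀ (by positivity)] at h3
    exact h3
  have h6 : 1 ≤ a t / w t := (one_le_div hwp).mpr h4
  rw [abs_of_nonneg (by linarith)]
  have h7 : a t / w t ≤ d t ^ 2 / (d t - ε) ^ 2 := by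
    rw [div_le_div_iff₀ hwp (by positivity)]
    linarith
  have h8 : (2 * d t * ε - ε ^ 2) / (d t - ε) ^ 2 = d t ^ 2 / (d t - ε) ^ 2 - 1 := by
    have := hs.ne'
    field_simp
    ring
  linarith
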